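/- Let H ∈ (0, 1/2) and α ∈ (0, 1/2). There exists a constant K₁ > 0 (depending only on α and H) such that for all real numbers 0 < η' < η: ∫_0^{η+η'} f_α(ξ, η, η') dξ ≤ K₁ η^{1−2H} (η − η')^{2α−1}. -/

import Mathlib

/-!
On the domain of integration `ξ ≤ η + η' ≤ 2η`, so `ξ ^ (1 - 2H)` is at most
`2 ^ (1 - 2H) * η ^ (1 - 2H)`. With `d = η - η'` and `ξ = η' + d t`, the remaining singular kernel
becomes `d ^ (2α - 2) * (|t - 1| ^ (α - 1) * |t| ^ (α - 1))`, and the change of variables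
contributes another factor `d`. The claim thus reduces to the integrability over the whole line
of `|t - 1| ^ (α - 1) * |t| ^ (α - 1)` (`integrable_kernel`): the singularities at `0` and `1` are
integrable because `0 < α`, and the decay `|t| ^ (2α - 2)` at infinity is integrable because
`α < 1/2`.
-/

open MeasureTheory intervalIntegral

/-- `f α H ξ η η' = |ξ − η|^{α−1} |ξ − η'|^{α−1} ξ^{1−2H}` if `η' ≤ η`, and `0` otherwise. -/
noncomputable def fKer (α H ξ η η' : ℝ) : ℝ :=
  if η' ≤ η then |ξ - η| ^ (α - 1) * |ξ - η'| ^ (α - 1) * ξ ^ (1 - 2*H) else 0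

/-- A radial profile with the singularity `x ^ (α - 1)` at `0` and the decay `x ^ (2α - 2)` at
infinity; the sum of its translates centred at `0` and `1` dominates the rescaled kernel. -/
noncomputable def profile (α x : ℝ) : ℝ :=
  if x ≤ 1 then 2 * x ^ (α - 1) else x ^ (2 * α - 2)

lemma profile_nonneg (α : ℝ) {x : ℝ} (hx : 0 ≤ x) : 0 ≤ profile α x := by
  unfold profile
  split_ifs <;> positivity

lemma integrable_profile_abs {α : ℝ} (hα₁ : 0 < α) (hα₂ : α < 1/2) :
    Integrable (fun t : ℝ => profile α |t|) := by
  have h : IntegrableOn (profile α) (Set.Ioi 0) := by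
    rw [← Set.Ioc_union_Ioi_eq_Ioi (zero_le_one' ℝ), integrableOn_union]
    constructor
    · have h1 : IntegrableOn (fun x : ℝ => 2 * x ^ (α - 1)) (Set.Ioc 0 1) := by
        have := (intervalIntegrable_rpow' (a := 0) (b := 1) (r := α - 1) (by linarith)).const_mul 2
        exact (intervalIntegrable_iff_integrableOn_Ioc_of_le zero_le_one).1 this
      refine h1.congr_fun (fun x hx => ?_) measurableSet_Ioc
      simp [profile, hx.2]
    · have h2 : IntegrableOn (fun x : ℝ => x ^ (2 * α - 2)) (Set.Ioi 1) :=
        integrableOn_Ioi_rpow_of_lt (by linarith) one_pos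
      refine h2.congr_fun (fun x hx => ?_) measurableSet_Ioi
      have : ¬ x ≤ 1 := not_le.2 hx
      simp [profile, this]
  have hpos : IntegrableOn (fun t : ℝ => profile α |t|) (Set.Ioi 0) :=
    h.congr_fun (fun x hx => by simp only [abs_of_pos (Set.mem_Ioi.1 hx)]) measurableSet_Ioi
  have hneg : IntegrableOn (fun t : ℝ => profile α |t|) (Set.Iic 0) := by
    rw [← Measure.map_neg_eq_self (volume : Measure ℝ)]
    let m : MeasurableEmbedding fun x : ℝ => -x := (Homeomorph.neg ℝ).measurableEmbedding
    rw [m.integrableOn_map_iff]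
    simp_rw [Function.comp_def, abs_neg, Set.neg_preimage, Set.neg_Iic, neg_zero]
    exact Iff.mpr integrableOn_Ici_iff_integrableOn_Ioi hpos
  rw [← integrableOn_univ, ← Set.Iic_union_Ioi (a := (0 : ℝ))]
  exact hneg.union hpos

/-- Bound of the kernel by the profile of the smaller distance, at a point at distances `a ≤ b`
from two singularities that are one unit apart. -/
lemma mul_rpow_le_profile {α a b : ℝ} (hα₁ : 0 < α) (hα₂ : α < 1/2) (ha : 0 ≤ a) (hab : a ≤ b)
    (h : 1 ≤ a + b) : b ^ (α - 1) * a ^ (α - 1) ≤ profile α a := by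
  unfold profile
  split_ifs with h1
  · have hb : (1/2 : ℝ) ≤ b := by linarith
    have h2 : b ^ (α - 1) ≤ 2 := by
      calc b ^ (α - 1) ≤ (1/2 : ℝ) ^ (α - 1) :=
            Real.rpow_le_rpow_of_nonpos (by norm_num) hb (by linarith)
        _ ≤ (1/2 : ℝ) ^ (-1 : ℝ) :=
            Real.rpow_le_rpow_of_exponent_ge (by norm_num) (by norm_num) (by linarith)
        _ = 2 := by rw [Real.rpow_neg_one]; norm_num
    gcongr
  · have ha' : 0 < a := by linarith
    calc b ^ (α - 1) * a ^ (α - 1) ≤ a ^ (α - 1) * a ^ (α - 1) := by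
          gcongr ?_ * _
          exact Real.rpow_le_rpow_of_nonpos ha' hab (by linarith)
      _ = a ^ (2 * α - 2) := by rw [← Real.rpow_add ha']; ring_nf

lemma integrable_kernel {α : ℝ} (hα₁ : 0 < α) (hα₂ : α < 1/2) :
    Integrable (fun t : ℝ => |t - 1| ^ (α - 1) * |t| ^ (α - 1)) := by
  have hp := integrable_profile_abs hα₁ hα₂
  refine (hp.add (hp.comp_sub_right 1)).mono' (by fun_prop) (.of_forall fun t => ?_)
  have h1 : 1 ≤ |t| + |t - 1| := by
    have := abs_sub t (t - 1)
    simpa using this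
  have p0 := profile_nonneg α (abs_nonneg t)
  have p1 := profile_nonneg α (abs_nonneg (t - 1))
  rw [Real.norm_of_nonneg (by positivity)]
  simp only [Pi.add_apply]
  rcases le_total |t| |t - 1| with h | h
  · linarith [mul_rpow_le_profile hα₁ hα₂ (abs_nonneg t) h h1]
  · have := mul_rpow_le_profile hα₁ hα₂ (abs_nonneg (t - 1)) h (by linarith)
    rw [mul_comm] at this
    linarith

theorem stmt_8 (H α : ℝ) (hH₁ : 0 < H) (hH₂ : H < 1/2) (hα₁ : 0 < α) (hα₂ : α < 1/2) :
    ∃ K₁ : ℝ, 0 < K₁ ∧ ∀ η' η : ℝ, 0 < η' → η' < η →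
      (∫ ξ in (0:ℝ)..(η + η'), fKer α H ξ η η')
        ≤ K₁ * η ^ (1 - 2*H) * (η - η') ^ (2*α - 1) := by
  set g : ℝ → ℝ := fun t => |t - 1| ^ (α - 1) * |t| ^ (α - 1) with hg
  have hg0 : ∀ t, 0 ≤ g t := fun t => by positivity
  have hgi : Integrable g := integrable_kernel hα₁ hα₂
  have hC : 0 ≤ ∫ t, g t := integral_nonneg hg0
  refine ⟨2 ^ (1 - 2*H) * ((∫ t, g t) + 1), by positivity, fun η' η hη' hlt => ?_⟩
  have hη : 0 < η := hη'.trans hlt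
  set d := η - η' with hd
  have hd0 : 0 < d := sub_pos.2 hlt
  set A : ℝ := (2 * η) ^ (1 - 2*H) * d ^ (2*α - 2) with hA
  have hA0 : 0 ≤ A := by positivity
  have hGi : Integrable (fun ξ => A * g ((ξ - η') / d)) :=
    ((hgi.comp_div hd0.ne').comp_sub_right η').const_mul A
  have hcov : ∫ ξ, A * g ((ξ - η') / d) = A * (d * ∫ t, g t) := by
    rw [MeasureTheory.integral_const_mul, integral_sub_right_eq_self (fun ξ => g (ξ / d)) η',
      Measure.integral_comp_div, abs_of_pos hd0, smul_eq_mul]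
  have hpt : ∀ ξ ∈ Set.Ioc 0 (η + η'), fKer α H ξ η η' ≤ A * g ((ξ - η') / d) := by
    intro ξ hξ
    have e1 : (ξ - η') / d - 1 = (ξ - η) / d := by
      field_simp
      rw [hd]; ring
    have e2 : d ^ (2*α - 2) = d ^ (α - 1) * d ^ (α - 1) := by
      rw [← Real.rpow_add hd0]; ring_nf
    have hne : d ^ (α - 1) ≠ 0 := (Real.rpow_pos_of_pos hd0 _).ne'
    have e3 : A * g ((ξ - η') / d)
        = |ξ - η| ^ (α - 1) * |ξ - η'| ^ (α - 1) * (2 * η) ^ (1 - 2*H) := by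
      simp only [hg, hA]
      rw [e1, e2, abs_div, abs_div, abs_of_pos hd0, Real.div_rpow (abs_nonneg _) hd0.le,
        Real.div_rpow (abs_nonneg _) hd0.le]
      field_simp
    rw [e3, fKer, if_pos hlt.le]
    have := hξ.1.le
    gcongr
    · linarith
    · linarith [hξ.2]
  have hf0 : ∀ ξ ∈ Set.Ioc 0 (η + η'), 0 ≤ fKer α H ξ η η' := by
    intro ξ hξ
    have := hξ.1.le
    rw [fKer, if_pos hlt.le]
    positivity
  have hd1 : d ^ (2*α - 1) = d ^ (2*α - 2) * d := by
    rw [← Real.rpow_add_one hd0.ne']; ring_nf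
  rw [integral_of_le (by positivity)]
  calc ∫ ξ in Set.Ioc 0 (η + η'), fKer α H ξ η η'
      ≤ ∫ ξ in Set.Ioc 0 (η + η'), A * g ((ξ - η') / d) :=
        integral_mono_of_nonneg
          ((ae_restrict_iff' measurableSet_Ioc).2 (.of_forall hf0)) hGi.integrableOn
          ((ae_restrict_iff' measurableSet_Ioc).2 (.of_forall hpt))
    _ ≤ ∫ ξ, A * g ((ξ - η') / d) :=
        setIntegral_le_integral hGi (.of_forall fun ξ => mul_nonneg hA0 (hg0 _))
    _ = 2 ^ (1 - 2*H) * (∫ t, g t) * η ^ (1 - 2*H) * d ^ (2*α - 1) := by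
        rw [hcov, hA, Real.mul_rpow zero_le_two hη.le, hd1]; ring
    _ ≤ 2 ^ (1 - 2*H) * ((∫ t, g t) + 1) * η ^ (1 - 2*H) * d ^ (2*α - 1) := by
        gcongr
        linarith
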